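/- arXiv:1012.4532 — 2 statements merged into one kernel-verified Lean document; each statement's English description precedes it below -/
import Mathlib

section
/- If a union ultrafilter u on F is stable, then it has the Ramsey property for pairs: for every partition F²_< = A₀ ∪ A₁ there exists A ∈ u such that A²_< ⊆ A₀ or A²_< ⊆ A₁. -/
open Finset

/-- `FU t` : the set of finite unions of an infinite sequence `t` in `F`. -/
def FU (t : ℕ → Finset ℕ) : Set (Finset ℕ) :=
  {x | ∃ v : Finset ℕ, v.Nonempty ∧ x = v.biUnion t}

/-- a sequence of nonempty pairwise disjoint finite sets. -/
def IsDisjointSeq (t : ℕ → Finset ℕ) : Prop :=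
  (∀ i, (t i).Nonempty) ∧ Pairwise (Function.onFun Disjoint t)

/-- `ordLT s t` : `max s < min t`, i.e. every element of `s` is below every element of `t`. -/
def ordLT (s t : Finset ℕ) : Prop := ∀ a ∈ s, ∀ b ∈ t, a < b

/-- `t` is an almost condensation of `s`: the FU-set of some tail of `t` is inside `FU s`. -/
def AlmostCond (t s : ℕ → Finset ℕ) : Prop :=
  ∃ m, FU (fun n => t (n + m)) ⊆ FU s

/-- a union ultrafilter: an ultrafilter on `F` with a base of FU-sets of disjoint sequences. -/
def IsUnionUltrafilter (u : Ultrafilter (Finset ℕ)) : Prop :=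
  ∀ A ∈ u, ∃ t, IsDisjointSeq t ∧ FU t ∈ u ∧ FU t ⊆ A

/-- stability: countably many FU-sets in `u` admit a common almost condensation in `u`. -/
def IsStable (u : Ultrafilter (Finset ℕ)) : Prop :=
  ∀ s : ℕ → ℕ → Finset ℕ, (∀ α, IsDisjointSeq (s α)) → (∀ α, FU (s α) ∈ u) →
    ∃ t, IsDisjointSeq t ∧ FU t ∈ u ∧ ∀ α, AlmostCond t (s α)

/-- the Ramsey property for pairs: every finite partition of the ordered pairs `F²_<`
has a homogeneous set of the form `A²_<` with `A ∈ u`. -/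
def RamseyPairs (u : Ultrafilter (Finset ℕ)) : Prop :=
  ∀ n : ℕ, ∀ c : Finset ℕ × Finset ℕ → Fin (n + 1),
    ∃ A ∈ u, ∃ i, ∀ v ∈ A, ∀ w ∈ A, ordLT v w → c (v, w) = i

lemma FU_union {t : ℕ → Finset ℕ} {x y : Finset ℕ} (hx : x ∈ FU t) (hy : y ∈ FU t) :
    x ∪ y ∈ FU t := by
  obtain ⟨a, ha, rfl⟩ := hx
  obtain ⟨b, hb, rfl⟩ := hy
  refine ⟨a ∪ b, ha.mono Finset.subset_union_left, ?_⟩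
  ext z
  simp only [Finset.mem_union, Finset.mem_biUnion]
  grind

lemma FU_nonempty {t : ℕ → Finset ℕ} (ht : IsDisjointSeq t) {x : Finset ℕ} (hx : x ∈ FU t) :
    x.Nonempty := by
  obtain ⟨a, ⟨i, hi⟩, rfl⟩ := hx
  obtain ⟨z, hz⟩ := ht.1 i
  exact ⟨z, Finset.mem_biUnion.2 ⟨i, hi, hz⟩⟩

/-- Almost every set lies above a given number. -/
lemma eventually_above (u : Ultrafilter (Finset ℕ)) (hu : IsUnionUltrafilter u) (n : ℕ) :
    {w : Finset ℕ | ∀ b ∈ w, n ≤ b} ∈ u := by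
  by_contra h
  rw [← Ultrafilter.compl_mem_iff_notMem] at h
  obtain ⟨t, ht, -, hsub⟩ := hu _ h
  have key : ∀ i, ∃ b ∈ t i, b < n := by
    intro i
    have hi : t i ∈ FU t := ⟨{i}, Finset.singleton_nonempty i, by simp⟩
    have := hsub hi
    simpa using this
  choose f hf hfn using key
  have inj : Function.Injective f := by
    intro i j hij
    by_contra hne
    have hd : Disjoint (t i) (t j) := ht.2 hne
    exact Finset.disjoint_left.1 hd (hf i) (hij ▸ hf j)
  have hfin : (Set.range f).Finite := (Set.finite_lt_nat n).subset (by
    rintro _ ⟨i, rfl⟩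
    exact hfn i)
  exact Set.infinite_range_of_injective inj hfin

open Classical in
/-- Elements of `v` followed by a small gap (with respect to `g`). -/
noncomputable def gaps (g : ℕ → ℕ) (v : Finset ℕ) : Finset ℕ :=
  v.filter (fun a => ∃ b ∈ v, a < b ∧ b < g a)

lemma gaps_union_small (g : ℕ → ℕ) (v w : Finset ℕ) (m : ℕ) (hm : m ∈ v)
    (hmax : ∀ a ∈ v, a ≤ m) (hvw : ordLT v w) (h : ∃ b ∈ w, b < g m) :
    (gaps g (v ∪ w)).card = (gaps g v).card + (gaps g w).card + 1 := by
  have e : gaps g (v ∪ w) = insert m (gaps g v ∪ gaps g w) := by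
    ext a
    simp only [gaps, Finset.mem_filter, Finset.mem_union, Finset.mem_insert]
    unfold ordLT at hvw
    grind
  have hd : Disjoint (gaps g v) (gaps g w) := by
    rw [Finset.disjoint_left]
    intro a ha hb
    exact lt_irrefl a (hvw a (Finset.mem_filter.1 ha).1 a (Finset.mem_filter.1 hb).1)
  have hn : m ∉ gaps g v ∪ gaps g w := by
    simp only [gaps, Finset.mem_filter, Finset.mem_union]
    unfold ordLT at hvw
    grind
  rw [e, Finset.card_insert_of_notMem hn, Finset.card_union_of_disjoint hd]

lemma gaps_union_large (g : ℕ → ℕ) (v w : Finset ℕ) (m : ℕ) (hm : m ∈ v)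
    (hmax : ∀ a ∈ v, a ≤ m) (hvw : ordLT v w) (h : ∀ b ∈ w, g m ≤ b) :
    (gaps g (v ∪ w)).card = (gaps g v).card + (gaps g w).card := by
  have e : gaps g (v ∪ w) = gaps g v ∪ gaps g w := by
    ext a
    simp only [gaps, Finset.mem_filter, Finset.mem_union]
    unfold ordLT at hvw
    grind
  have hd : Disjoint (gaps g v) (gaps g w) := by
    rw [Finset.disjoint_left]
    intro a ha hb
    exact lt_irrefl a (hvw a (Finset.mem_filter.1 ha).1 a (Finset.mem_filter.1 hb).1)
  rw [e, Finset.card_union_of_disjoint hd]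

/-- For every `g`, some FU-set in `u` has only large gaps between ordered pairs. -/
lemma exists_sparse (u : Ultrafilter (Finset ℕ)) (hu : IsUnionUltrafilter u) (g : ℕ → ℕ) :
    ∃ A ∈ u, (∀ v ∈ A, v.Nonempty) ∧ ∀ v ∈ A, ∀ w ∈ A, ordLT v w →
      ∀ m ∈ v, (∀ a ∈ v, a ≤ m) → ∀ b ∈ w, g m ≤ b := by
  by_cases hE : {v | Even (gaps g v).card} ∈ u
  · obtain ⟨t, ht, htu, hsub⟩ := hu _ hE
    refine ⟨FU t, htu, fun v hv => FU_nonempty ht hv, ?_⟩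
    intro v hv w hw hvw m hm hmax
    by_contra! hc
    have h1 : Even (gaps g v).card := hsub hv
    have h2 : Even (gaps g w).card := hsub hw
    have h3 : Even (gaps g (v ∪ w)).card := hsub (FU_union hv hw)
    rw [gaps_union_small g v w m hm hmax hvw hc] at h3
    grind
  · exfalso
    rw [← Ultrafilter.compl_mem_iff_notMem] at hE
    obtain ⟨t, ht, htu, hsub⟩ := hu _ hE
    obtain ⟨v, hv⟩ := u.nonempty_of_mem htu
    have hne := FU_nonempty ht hv
    obtain ⟨w, hw, hwa⟩ := u.nonempty_of_mem (Filter.inter_mem htu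
      (eventually_above u hu (v.max' hne + 1 + g (v.max' hne))))
    have hwa' : ∀ b ∈ w, v.max' hne + 1 + g (v.max' hne) ≤ b := hwa
    have hmax : ∀ a ∈ v, a ≤ v.max' hne := fun a ha => v.le_max' a ha
    have hvw : ordLT v w := by
      intro a ha b hb
      have := hwa' b hb
      have := hmax a ha
      omega
    have h1 : ¬ Even (gaps g v).card := hsub hv
    have h2 : ¬ Even (gaps g w).card := hsub hw
    have h3 : ¬ Even (gaps g (v ∪ w)).card := hsub (FU_union hv hw)
    rw [gaps_union_large g v w _ (v.max'_mem hne) hmax hvw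
      (fun b hb => by have := hwa' b hb; omega)] at h3
    grind

lemma core (u : Ultrafilter (Finset ℕ))
    (hu : IsUnionUltrafilter u) (hs : IsStable u) (P : Set (Finset ℕ × Finset ℕ))
    (hB : {v | {w | (v, w) ∈ P} ∈ u} ∈ u) :
    ∃ A ∈ u, ∀ v ∈ A, ∀ w ∈ A, ordLT v w → (v, w) ∈ P := by
  have hD : ∀ n : ℕ, {w | ∀ v ∈ (Finset.range (n + 1)).powerset,
      {w | (v, w) ∈ P} ∈ u → (v, w) ∈ P} ∈ u := by
    intro n
    have : ∀ᶠ w in (u : Filter (Finset ℕ)), ∀ v ∈ (Finset.range (n + 1)).powerset,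
        {w | (v, w) ∈ P} ∈ u → (v, w) ∈ P := by
      rw [Filter.eventually_all_finset]
      intro v _
      by_cases h : {w | (v, w) ∈ P} ∈ u
      · filter_upwards [h] with w hw _ using hw
      · exact Filter.Eventually.of_forall fun w h' => absurd h' h
    exact this
  choose s hs1 hs2 hs3 using fun n => hu _ (hD n)
  obtain ⟨t, ht, htu, hac⟩ := hs s hs1 hs2
  choose k hk using hac
  obtain ⟨A, hA, hAne, hsp⟩ := exists_sparse u hu
    (fun n => ((Finset.range (k n)).biUnion t).sup id + 1)
  refine ⟨A ∩ (FU t ∩ {v | {w | (v, w) ∈ P} ∈ u}),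
    Filter.inter_mem hA (Filter.inter_mem htu hB), ?_⟩
  rintro v ⟨hvA, -, hvB⟩ w ⟨hwA, hwt, -⟩ hvw
  have hne := hAne v hvA
  set m := v.max' hne with hmdef
  have hlarge := hsp v hvA w hwA hvw m (v.max'_mem hne) (fun a ha => v.le_max' a ha)
  have hwk : w ∈ FU (fun n => t (n + k m)) := by
    obtain ⟨a, ha, rfl⟩ := hwt
    have hge : ∀ i ∈ a, k m ≤ i := by
      intro i hi
      by_contra! hlt
      obtain ⟨z, hz⟩ := ht.1 i
      have h1 := hlarge z (Finset.mem_biUnion.2 ⟨i, hi, hz⟩)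
      have h2 : id z ≤ ((Finset.range (k m)).biUnion t).sup id :=
        Finset.le_sup (Finset.mem_biUnion.2 ⟨i, Finset.mem_range.2 hlt, hz⟩)
      simp only [id] at h2 h1
      omega
    refine ⟨a.image (fun i => i - k m), ha.image _, ?_⟩
    rw [Finset.image_biUnion]
    refine Finset.biUnion_congr rfl fun i hi => ?_
    rw [Nat.sub_add_cancel (hge i hi)]
  refine hs3 m (hk m hwk) v ?_ hvB
  rw [Finset.mem_powerset]
  intro a ha
  exact Finset.mem_range.2 (Nat.lt_succ_of_le (v.le_max' a ha))

/-- A stable union ultrafilter has the Ramsey property for pairs: for every partition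
`F²_< = A₀ ∪ A₁` there is `A ∈ u` with `A²_< ⊆ A₀` or `A²_< ⊆ A₁`. -/
theorem stable_implies_ramsey_pairs (u : Ultrafilter (Finset ℕ))
    (hu : IsUnionUltrafilter u) (hs : IsStable u)
    (A₀ A₁ : Set (Finset ℕ × Finset ℕ))
    (hcover : ∀ p : Finset ℕ × Finset ℕ, ordLT p.1 p.2 → p ∈ A₀ ∪ A₁) :
    ∃ A ∈ u, (∀ v ∈ A, ∀ w ∈ A, ordLT v w → (v, w) ∈ A₀) ∨
      (∀ v ∈ A, ∀ w ∈ A, ordLT v w → (v, w) ∈ A₁) := by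
  by_cases h0 : {v | {w | (v, w) ∈ A₀} ∈ u} ∈ u
  · obtain ⟨A, hA, h⟩ := core u hu hs A₀ h0
    exact ⟨A, hA, Or.inl h⟩
  · rw [← Ultrafilter.compl_mem_iff_notMem] at h0
    obtain ⟨A, hA, h⟩ := core u hu hs A₁ (by
      filter_upwards [h0] with v hv
      have hv' : {w | (v, w) ∈ A₀}ᶜ ∈ u := Ultrafilter.compl_mem_iff_notMem.2 hv
      filter_upwards [hv', eventually_above u hu (v.sup id + 1)] with w hw hw2
      have hlt : ordLT v w := by
        intro a ha b hb
        have h1 : id a ≤ v.sup id := Finset.le_sup ha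
        have h2 : v.sup id + 1 ≤ b := hw2 b hb
        simp only [id] at h1 h2
        exact lt_of_le_of_lt h1 h2
      exact (hcover (v, w) hlt).resolve_left hw)
    exact ⟨A, hA, Or.inr h⟩
end

section
/- Every ultrafilter additively isomorphic to a stable ordered union ultrafilter is itself a stable ordered union ultrafilter. -/
open Finset

/-- an ordered sequence: `max (t i) < min (t j)` for `i < j`. -/
def IsOrderedSeq (t : ℕ → Finset ℕ) : Prop := ∀ i j : ℕ, i < j → ordLT (t i) (t j)

/-- `u` and `u'` are additively isomorphic: there are `FU s ∈ u`, `FU x ∈ u'` such that the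
natural map `∪_{i∈v} s i ↦ ∪_{i∈v} x i` sends `u` to `u'`. -/
def AddIso (u u' : Ultrafilter (Finset ℕ)) : Prop :=
  ∃ s x : ℕ → Finset ℕ, IsDisjointSeq s ∧ IsDisjointSeq x ∧ FU s ∈ u ∧ FU x ∈ u' ∧
    ∃ φ : Finset ℕ → Finset ℕ,
      (∀ v : Finset ℕ, v.Nonempty → φ (v.biUnion s) = v.biUnion x) ∧
      Ultrafilter.map φ u = u'

/-- an ordered union ultrafilter: a base of FU-sets of ordered disjoint sequences. -/
def IsOrderedUnionUltrafilter (u : Ultrafilter (Finset ℕ)) : Prop :=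
  ∀ A ∈ u, ∃ t, IsDisjointSeq t ∧ IsOrderedSeq t ∧ FU t ∈ u ∧ FU t ⊆ A

theorem ordered_ge (t : ℕ → Finset ℕ) (hd : IsDisjointSeq t) (ho : IsOrderedSeq t) (i : ℕ) :
    ∀ a ∈ t i, i ≤ a := by
  induction i with
  | zero => intro a _; exact Nat.zero_le a
  | succ k ih =>
    intro a ha
    obtain ⟨b, hb⟩ := hd.1 k
    have h1 := ih b hb
    have h2 := ho k (k+1) (Nat.lt_succ_self k) b hb a ha
    omega

theorem disjoint_of_ordered (t : ℕ → Finset ℕ) (hn : ∀ i, (t i).Nonempty)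
    (ho : IsOrderedSeq t) : IsDisjointSeq t := by
  refine ⟨hn, ?_⟩
  intro i j hij
  rw [Function.onFun, Finset.disjoint_left]
  intro a hi hj
  rcases lt_or_gt_of_ne hij with h | h
  · exact lt_irrefl _ (ho i j h a hi a hj)
  · exact lt_irrefl _ (ho j i h a hj a hi)

theorem finite_hit (s : ℕ → Finset ℕ) (hs : IsDisjointSeq s) (M : ℕ) :
    {j | ∃ a ∈ s j, a ≤ M}.Finite := by
  have hc : ∀ j, ∃ a, (∃ a ∈ s j, a ≤ M) → a ∈ s j ∧ a ≤ M := by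
    intro j
    by_cases h : ∃ a ∈ s j, a ≤ M
    · obtain ⟨a, ha⟩ := h
      exact ⟨a, fun _ => ha⟩
    · exact ⟨0, fun h' => absurd h' h⟩
  choose f hf using hc
  apply Set.Finite.of_injOn (f := f) (t := Set.Iic M) _ _ (Set.finite_Iic M)
  · intro j hj
    exact (hf j hj).2
  · intro i hi j hj hij
    by_contra hne
    have h1 := (hf i hi).1
    have h2 := (hf j hj).1
    rw [← hij] at h2
    exact Finset.disjoint_left.1 (hs.2 hne) h1 h2

theorem gap_exists (s x : ℕ → Finset ℕ) (hs : IsDisjointSeq s) (hx : IsDisjointSeq x) (p : ℕ) :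
    ∃ N, ∀ i j, (∀ a ∈ s i, a ≤ p) → (∀ b ∈ s j, N ≤ b) → ordLT (x i) (x j) := by
  set S := (finite_hit s hs p).toFinset with hS
  set M := (S.biUnion x).sup id with hM
  set T := (finite_hit x hx M).toFinset with hT
  refine ⟨(T.biUnion s).sup id + 1, ?_⟩
  intro i j hi hj a ha b hb
  have hiS : i ∈ S := by
    obtain ⟨c, hc⟩ := hs.1 i
    simp only [hS, Set.Finite.mem_toFinset, Set.mem_setOf_eq]
    exact ⟨c, hc, hi c hc⟩
  have haM : a ≤ M := Finset.le_sup (f := id) (Finset.mem_biUnion.2 ⟨i, hiS, ha⟩)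
  by_contra hlt
  have hjT : j ∈ T := by
    simp only [hT, Set.Finite.mem_toFinset, Set.mem_setOf_eq]
    exact ⟨b, hb, by omega⟩
  obtain ⟨c, hc⟩ := hs.1 j
  have h1 := hj c hc
  have h2 : c ≤ (T.biUnion s).sup id :=
    Finset.le_sup (f := id) (Finset.mem_biUnion.2 ⟨j, hjT, hc⟩)
  omega

/-- the set of last elements before large gaps (including the maximum). -/
def gapSet (g : ℕ → ℕ) (a : Finset ℕ) : Finset ℕ :=
  a.filter (fun p => ∀ q ∈ a, p < q → g p ≤ q)

theorem gap_union (g : ℕ → ℕ) (a b : Finset ℕ) (hab : ordLT a b) (p : ℕ) (hp : p ∈ a)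
    (hmax : ∀ q ∈ a, q ≤ p) (h : ∀ q ∈ b, g p ≤ q) :
    (gapSet g (a ∪ b)).card = (gapSet g a).card + (gapSet g b).card := by
  have hd : Disjoint (gapSet g a) (gapSet g b) := by
    rw [Finset.disjoint_left]
    intro c h1 h2
    exact lt_irrefl _ (hab c (Finset.mem_filter.1 h1).1 c (Finset.mem_filter.1 h2).1)
  rw [← Finset.card_union_of_disjoint hd]
  congr 1
  ext c
  simp only [gapSet, Finset.mem_filter, Finset.mem_union]
  constructor
  · rintro ⟨h1 | h1, h2⟩
    · exact Or.inl ⟨h1, fun q hq => h2 q (Or.inl hq)⟩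
    · exact Or.inr ⟨h1, fun q hq => h2 q (Or.inr hq)⟩
  · rintro (⟨h1, h2⟩ | ⟨h1, h2⟩)
    · refine ⟨Or.inl h1, ?_⟩
      rintro q (hq | hq) hlt
      · exact h2 q hq hlt
      · rcases (hmax c h1).lt_or_eq with h3 | h3
        · have := h2 p hp h3
          have := hab p hp q hq
          omega
        · subst h3; exact h q hq
    · refine ⟨Or.inr h1, ?_⟩
      rintro q (hq | hq) hlt
      · have := hab q hq c h1; omega
      · exact h2 q hq hlt

theorem nogap_union (g : ℕ → ℕ) (a b : Finset ℕ) (hab : ordLT a b) (p : ℕ) (hp : p ∈ a)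
    (hmax : ∀ q ∈ a, q ≤ p) (h : ¬ ∀ q ∈ b, g p ≤ q) :
    (gapSet g (a ∪ b)).card + 1 = (gapSet g a).card + (gapSet g b).card := by
  have hpa : p ∈ gapSet g a := by
    refine Finset.mem_filter.2 ⟨hp, fun q hq hlt => ?_⟩
    have := hmax q hq
    omega
  have hd : Disjoint ((gapSet g a).erase p) (gapSet g b) := by
    rw [Finset.disjoint_left]
    intro c h1 h2
    exact lt_irrefl _ (hab c (Finset.mem_filter.1 (Finset.mem_of_mem_erase h1)).1 c
      (Finset.mem_filter.1 h2).1)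
  have he := Finset.card_erase_add_one hpa
  have hu := Finset.card_union_of_disjoint hd
  have heq : gapSet g (a ∪ b) = (gapSet g a).erase p ∪ gapSet g b := by
    ext c
    simp only [gapSet, Finset.mem_filter, Finset.mem_union, Finset.mem_erase]
    constructor
    · rintro ⟨h1 | h1, h2⟩
      · refine Or.inl ⟨?_, h1, fun q hq => h2 q (Or.inl hq)⟩
        rintro rfl
        exact h fun q hq => h2 q (Or.inr hq) (hab c h1 q hq)
      · exact Or.inr ⟨h1, fun q hq => h2 q (Or.inr hq)⟩
    · rintro (⟨hne, h1, h2⟩ | ⟨h1, h2⟩)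
      · refine ⟨Or.inl h1, ?_⟩
        rintro q (hq | hq) hlt
        · exact h2 q hq hlt
        · have h3 := lt_of_le_of_ne (hmax c h1) hne
          have := h2 p hp h3
          have := hab p hp q hq
          omega
      · refine ⟨Or.inr h1, ?_⟩
        rintro q (hq | hq) hlt
        · have := hab q hq c h1; omega
        · exact h2 q hq hlt
  rw [heq]
  omega

theorem mem_FU_single (t : ℕ → Finset ℕ) (i : ℕ) : t i ∈ FU t :=
  ⟨{i}, Finset.singleton_nonempty i, by simp⟩

theorem mem_FU_pair (t : ℕ → Finset ℕ) (i j : ℕ) : t i ∪ t j ∈ FU t :=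
  ⟨{i, j}, Finset.insert_nonempty _ _, by simp [Finset.biUnion_insert]⟩

theorem spread (u : Ultrafilter (Finset ℕ)) (hu : IsOrderedUnionUltrafilter u) (g : ℕ → ℕ)
    (A : Set (Finset ℕ)) (hA : A ∈ u) :
    ∃ t, IsDisjointSeq t ∧ IsOrderedSeq t ∧ FU t ∈ u ∧ FU t ⊆ A ∧
      ∀ i j, i < j → ∃ p ∈ t i, (∀ q ∈ t i, q ≤ p) ∧ ∀ q ∈ t j, g p ≤ q := by
  have key : ∀ t, IsDisjointSeq t → IsOrderedSeq t →
      (∀ a ∈ FU t, ∀ b ∈ FU t, ((gapSet g a).card % 2 = (gapSet g b).card % 2)) →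
      ∀ i j, i < j → ∃ p ∈ t i, (∀ q ∈ t i, q ≤ p) ∧ ∀ q ∈ t j, g p ≤ q := by
    intro t hd ho hh i j hij
    have hm : ∃ p ∈ t i, ∀ q ∈ t i, q ≤ p :=
      ⟨(t i).max' (hd.1 i), Finset.max'_mem _ _, fun q hq => Finset.le_max' _ q hq⟩
    obtain ⟨p, hp, hmax⟩ := hm
    refine ⟨p, hp, hmax, ?_⟩
    by_contra hno
    have h1 := nogap_union g (t i) (t j) (ho i j hij) p hp hmax hno
    have h2 := gap_union g (t i) (t (i + 1 + g p)) (ho _ _ (by omega)) p hp hmax (by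
      intro q hq
      have := ordered_ge t hd ho _ q hq
      omega)
    have e1 := hh _ (mem_FU_single t i) _ (mem_FU_single t j)
    have e2 := hh _ (mem_FU_single t i) _ (mem_FU_pair t i j)
    have e3 := hh _ (mem_FU_single t i) _ (mem_FU_single t (i + 1 + g p))
    have e4 := hh _ (mem_FU_single t i) _ (mem_FU_pair t i (i + 1 + g p))
    omega
  have hc : ∃ k, {a | (gapSet g a).card % 2 = k} ∈ u := by
    rcases u.mem_or_compl_mem {a | (gapSet g a).card % 2 = 0} with h | h
    · exact ⟨0, h⟩
    · refine ⟨1, Filter.mem_of_superset h ?_⟩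
      intro a ha
      simp only [Set.mem_compl_iff, Set.mem_setOf_eq] at ha ⊢
      omega
  obtain ⟨k, hk⟩ := hc
  obtain ⟨t, hd, ho, hm, hsub⟩ := hu _ (Filter.inter_mem hA hk)
  refine ⟨t, hd, ho, hm, fun a ha => (hsub ha).1, key t hd ho ?_⟩
  intro a ha b hb
  exact (hsub ha).2.trans (hsub hb).2.symm

theorem FU_tail (t r : ℕ → Finset ℕ) (hd : IsDisjointSeq t) (ho : IsOrderedSeq t)
    (hr : IsDisjointSeq r) (h : FU t ⊆ FU r) (m : ℕ) :
    ∃ m', FU (fun n => t (n + m')) ⊆ FU (fun n => r (n + m)) := by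
  set K := ((Finset.range m).biUnion r).sup id with hK
  refine ⟨K + 1, ?_⟩
  rintro a ⟨v, hv, rfl⟩
  have hmem : v.biUnion (fun n => t (n + (K + 1))) ∈ FU t := by
    refine ⟨v.image (fun n => n + (K + 1)), hv.image _, ?_⟩
    rw [Finset.image_biUnion]
  obtain ⟨w, hw, hwe⟩ := h hmem
  have hwm : ∀ k ∈ w, m ≤ k := by
    intro k hk
    by_contra hlt
    obtain ⟨c, hc⟩ := hr.1 k
    have h1 : c ≤ K := Finset.le_sup (f := id)
      (Finset.mem_biUnion.2 ⟨k, Finset.mem_range.2 (by omega), hc⟩)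
    have h2 : c ∈ w.biUnion r := Finset.mem_biUnion.2 ⟨k, hk, hc⟩
    rw [← hwe] at h2
    obtain ⟨n, -, hn⟩ := Finset.mem_biUnion.1 h2
    have := ordered_ge t hd ho _ c hn
    omega
  refine ⟨w.image (fun k => k - m), hw.image _, ?_⟩
  rw [hwe, Finset.image_biUnion]
  refine Finset.biUnion_congr rfl ?_
  intro k hk
  have := hwm k hk
  congr 1
  omega

theorem transfer (u u' : Ultrafilter (Finset ℕ)) (hu : IsOrderedUnionUltrafilter u)
    (s x : ℕ → Finset ℕ) (hs : IsDisjointSeq s) (hx : IsDisjointSeq x) (hsu : FU s ∈ u)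
    (φ : Finset ℕ → Finset ℕ)
    (hφ : ∀ v : Finset ℕ, v.Nonempty → φ (v.biUnion s) = v.biUnion x)
    (hmap : Ultrafilter.map φ u = u') (A : Set (Finset ℕ)) (hA : A ∈ u) :
    ∃ t y, IsDisjointSeq t ∧ IsOrderedSeq t ∧ FU t ⊆ A ∧ IsDisjointSeq y ∧ IsOrderedSeq y ∧
      FU y ∈ u' ∧ ∀ w : Finset ℕ, w.Nonempty → φ (w.biUnion t) = w.biUnion y := by
  choose g hg using gap_exists s x hs hx
  obtain ⟨t, hd, ho, hm, hsub, hgap⟩ := spread u hu g _ (Filter.inter_mem hA hsu)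
  have hv : ∀ i, ∃ v : Finset ℕ, v.Nonempty ∧ t i = v.biUnion s :=
    fun i => (hsub (mem_FU_single t i)).2
  choose v hvn hv using hv
  have hmaps : ∀ w : Finset ℕ, w.Nonempty →
      φ (w.biUnion t) = w.biUnion (fun i => (v i).biUnion x) := by
    intro w hw
    have : w.biUnion t = (w.biUnion v).biUnion s := by
      rw [Finset.biUnion_biUnion]
      exact Finset.biUnion_congr rfl fun i _ => hv i
    rw [this, hφ _ (hw.biUnion fun i _ => hvn i), Finset.biUnion_biUnion]
  have hyo : IsOrderedSeq (fun i => (v i).biUnion x) := by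
    intro i j hij a ha b hb
    obtain ⟨i', hi', ha⟩ := Finset.mem_biUnion.1 ha
    obtain ⟨j', hj', hb⟩ := Finset.mem_biUnion.1 hb
    obtain ⟨p, hp, hmax, hq⟩ := hgap i j hij
    refine hg p i' j' ?_ ?_ a ha b hb
    · intro c hc
      apply hmax
      rw [hv i]
      exact Finset.mem_biUnion.2 ⟨i', hi', hc⟩
    · intro c hc
      apply hq
      rw [hv j]
      exact Finset.mem_biUnion.2 ⟨j', hj', hc⟩
  refine ⟨t, fun i => (v i).biUnion x, hd, ho, fun a ha => (hsub ha).1,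
    disjoint_of_ordered _ (fun i => (hvn i).biUnion fun k _ => hx.1 k) hyo, hyo, ?_, hmaps⟩
  rw [← hmap, Ultrafilter.mem_map]
  refine Filter.mem_of_superset hm ?_
  rintro a ⟨w, hw, rfl⟩
  exact ⟨w, hw, hmaps w hw⟩

/-- Every additively isomorphic image of a stable ordered union ultrafilter is a
stable ordered union ultrafilter. -/
theorem addIso_stable_ordered_union (u u' : Ultrafilter (Finset ℕ))
    (hu : IsOrderedUnionUltrafilter u) (hst : IsStable u) (hiso : AddIso u u') :
    IsOrderedUnionUltrafilter u' ∧ IsStable u' := by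
  obtain ⟨s, x, hs, hx, hsu, -, φ, hφ, hmap⟩ := hiso
  have tr := transfer u u' hu s x hs hx hsu φ hφ hmap
  have hpre : ∀ A ∈ u', φ ⁻¹' A ∈ u := by
    intro A hA
    rw [← hmap, Ultrafilter.mem_map] at hA
    exact hA
  constructor
  · intro A hA
    obtain ⟨t, y, -, -, hsub, hyd, hyo, hyu, hty⟩ := tr _ (hpre A hA)
    refine ⟨y, hyd, hyo, hyu, ?_⟩
    rintro a ⟨w, hw, rfl⟩
    rw [← hty w hw]
    exact hsub ⟨w, hw, rfl⟩
  · intro s' _ hsu'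
    have hr : ∀ α, ∃ r, IsDisjointSeq r ∧ IsOrderedSeq r ∧ FU r ∈ u ∧
        FU r ⊆ φ ⁻¹' (FU (s' α)) := fun α => hu _ (hpre _ (hsu' α))
    choose r hrd _ hru hrs using hr
    obtain ⟨t₀, ht₀d, ht₀u, hac⟩ := hst r hrd hru
    obtain ⟨t, y, htd, hto, hsub, hyd, hyo, hyu, hty⟩ := tr _ ht₀u
    refine ⟨y, hyd, hyu, fun α => ?_⟩
    obtain ⟨m, hm⟩ := hac α
    obtain ⟨m', hm'⟩ := FU_tail t t₀ htd hto ht₀d hsub m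
    refine ⟨m', ?_⟩
    rintro a ⟨w, hw, rfl⟩
    have h1 := hrs α (hm (hm' ⟨w, hw, rfl⟩))
    have h2 := hty (w.image (fun n => n + m')) (hw.image _)
    rw [Finset.image_biUnion, Finset.image_biUnion] at h2
    rw [← h2]
    exact h1
end
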